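/- Let P = (I(X,t), J(Y,t)) be a pair of fractions in ℂ(X,t) × ℂ(Y,t). Then P is a pair of Galois invariants if and only if the evaluations I(x,1/S(x,y)) and J(y,1/S(x,y)) are equal, in which case this common value belongs to k(x) ∩ k(y). Moreover, P is a constant pair of Galois invariants if and only if this common value lies in k. -/

import Mathlib

open IntermediateField
open scoped BigOperators Classical

set_option synthInstance.maxHeartbeats 1000000
set_option maxHeartbeats 1600000

noncomputable section

namespace QuadrantWalk

variable {K : Type} [Field K] [Algebra ℂ K]

/-- Evaluation of the step (Laurent) polynomial `S(X,Y) = ∑ w_{i,j} X^i Y^j`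
    at a pair of elements of a field. -/
def stepEval (St : Finset (ℤ × ℤ)) (w : ℤ × ℤ → ℂ) (u v : K) : K :=
  ∑ p ∈ St, algebraMap ℂ K (w p) * u ^ p.1 * v ^ p.2

/-- The step polynomial involves both `X` and `Y`. -/
def NotUnivariate (St : Finset (ℤ × ℤ)) : Prop :=
  (∃ p ∈ St, ∃ q ∈ St, p.1 ≠ q.1) ∧ ∃ p ∈ St, ∃ q ∈ St, p.2 ≠ q.2

/-- The kernel polynomial `K̃(X,Y,t) = X^mx * Y^my * (1 - t·S(X,Y))` as an element of
`ℂ[X,Y,t]`, with variables `0 ↦ X`, `1 ↦ Y`, `2 ↦ t`. -/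
def kernelPoly (St : Finset (ℤ × ℤ)) (w : ℤ × ℤ → ℂ) (mx my : ℕ) :
    MvPolynomial (Fin 3) ℂ :=
  MvPolynomial.X 0 ^ mx * MvPolynomial.X 1 ^ my -
    MvPolynomial.X 2 *
      ∑ p ∈ St, MvPolynomial.C (w p) *
        MvPolynomial.X 0 ^ (p.1 + (mx : ℤ)).toNat *
        MvPolynomial.X 1 ^ (p.2 + (my : ℤ)).toNat

/-- `-mx` (resp. `-my`) is the smallest `X`-exponent (resp. `Y`-exponent) of the model. -/
structure ExponentBounds (St : Finset (ℤ × ℤ)) (mx my : ℕ) : Prop where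
  lowerX : ∀ p ∈ St, -(mx : ℤ) ≤ p.1
  lowerY : ∀ p ∈ St, -(my : ℤ) ≤ p.2
  attainX : ∃ p ∈ St, p.1 = -(mx : ℤ)
  attainY : ∃ p ∈ St, p.2 = -(my : ℤ)

/-- `x`-adjacency : equal first coordinates and equal values of `S`. -/
def XAdj (St : Finset (ℤ × ℤ)) (w : ℤ × ℤ → ℂ) (a b : K × K) : Prop :=
  a.1 = b.1 ∧ stepEval St w a.1 a.2 = stepEval St w b.1 b.2

/-- `y`-adjacency : equal second coordinates and equal values of `S`. -/
def YAdj (St : Finset (ℤ × ℤ)) (w : ℤ × ℤ → ℂ) (a b : K × K) : Prop :=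
  a.2 = b.2 ∧ stepEval St w a.1 a.2 = stepEval St w b.1 b.2

/-- Adjacency. -/
def Adj (St : Finset (ℤ × ℤ)) (w : ℤ × ℤ → ℂ) (a b : K × K) : Prop :=
  XAdj St w a b ∨ YAdj St w a b

/-- The orbit of the walk: the equivalence class of `(x,y)` under the
reflexive-transitive closure of adjacency. -/
def orbit (St : Finset (ℤ × ℤ)) (w : ℤ × ℤ → ℂ) (x y : K) : Set (K × K) :=
  {a | Relation.ReflTransGen (Adj St w) (x, y) a}

/-- `k = ℂ(S(x,y))`. -/
def kF (St : Finset (ℤ × ℤ)) (w : ℤ × ℤ → ℂ) (x y : K) : IntermediateField ℂ K :=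
  adjoin ℂ {stepEval St w x y}

/-- `k(x) = ℂ(x, S(x,y))`. -/
def kxF (St : Finset (ℤ × ℤ)) (w : ℤ × ℤ → ℂ) (x y : K) : IntermediateField ℂ K :=
  adjoin ℂ {x, stepEval St w x y}

/-- `k(y) = ℂ(y, S(x,y))`. -/
def kyF (St : Finset (ℤ × ℤ)) (w : ℤ × ℤ → ℂ) (x y : K) : IntermediateField ℂ K :=
  adjoin ℂ {y, stepEval St w x y}

/-- `k(x,y) = ℂ(x,y)`. -/
def kxyF (x y : K) : IntermediateField ℂ K := adjoin ℂ {x, y}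

/-- `k(𝒪)`: the subfield generated over `k` by all coordinates of the orbit. -/
def orbitF (St : Finset (ℤ × ℤ)) (w : ℤ × ℤ → ℂ) (x y : K) : IntermediateField ℂ K :=
  adjoin ℂ ({stepEval St w x y} ∪ {z | ∃ a ∈ orbit St w x y, z = a.1 ∨ z = a.2})

/-- The standing hypotheses: nonzero weights, a non-univariate step polynomial,
`x, y` algebraically independent over `ℂ`, and `𝕂` an algebraic closure of `ℂ(x,y)`. -/
structure Setting (St : Finset (ℤ × ℤ)) (w : ℤ × ℤ → ℂ) (x y : K) : Prop where
  weight_ne : ∀ p ∈ St, w p ≠ 0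
  notUniv : NotUnivariate St
  indep : AlgebraicIndependent ℂ ![x, y]
  algClosed : IsAlgClosed K
  algebraic : Algebra.IsAlgebraic (kxyF x y) K

lemma self_mem_orbit (St : Finset (ℤ × ℤ)) (w : ℤ × ℤ → ℂ) (x y : K) :
    (x, y) ∈ orbit St w x y := Relation.ReflTransGen.refl

lemma x_mem_orbitF (St : Finset (ℤ × ℤ)) (w : ℤ × ℤ → ℂ) (x y : K) :
    x ∈ orbitF St w x y := by
  apply subset_adjoin
  exact Set.mem_union_right _ ⟨(x, y), self_mem_orbit St w x y, Or.inl rfl⟩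

lemma y_mem_orbitF (St : Finset (ℤ × ℤ)) (w : ℤ × ℤ → ℂ) (x y : K) :
    y ∈ orbitF St w x y := by
  apply subset_adjoin
  exact Set.mem_union_right _ ⟨(x, y), self_mem_orbit St w x y, Or.inr rfl⟩

lemma S_mem_orbitF (St : Finset (ℤ × ℤ)) (w : ℤ × ℤ → ℂ) (x y : K) :
    stepEval St w x y ∈ orbitF St w x y := by
  apply subset_adjoin
  exact Set.mem_union_left _ rfl

lemma x_mem_kxF (St : Finset (ℤ × ℤ)) (w : ℤ × ℤ → ℂ) (x y : K) :
    x ∈ kxF St w x y :=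
  subset_adjoin ℂ _ (Set.mem_insert _ _)

lemma S_mem_kxF (St : Finset (ℤ × ℤ)) (w : ℤ × ℤ → ℂ) (x y : K) :
    stepEval St w x y ∈ kxF St w x y :=
  subset_adjoin ℂ _ (Set.mem_insert_of_mem _ rfl)

lemma y_mem_kyF (St : Finset (ℤ × ℤ)) (w : ℤ × ℤ → ℂ) (x y : K) :
    y ∈ kyF St w x y :=
  subset_adjoin ℂ _ (Set.mem_insert _ _)

lemma S_mem_kyF (St : Finset (ℤ × ℤ)) (w : ℤ × ℤ → ℂ) (x y : K) :
    stepEval St w x y ∈ kyF St w x y :=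
  subset_adjoin ℂ _ (Set.mem_insert_of_mem _ rfl)

/-- The subgroup of `ℂ`-automorphisms of `M` fixing the subfield `E` pointwise. -/
def fixingAuts (E M : IntermediateField ℂ K) : Subgroup (↥M ≃ₐ[ℂ] ↥M) where
  carrier := {σ | ∀ (z : K) (_ : z ∈ E) (hzM : z ∈ M), σ ⟨z, hzM⟩ = ⟨z, hzM⟩}
  one_mem' := fun _ _ _ => rfl
  mul_mem' := by
    intro σ τ hσ hτ z hzE hzM
    show σ (τ ⟨z, hzM⟩) = ⟨z, hzM⟩
    rw [hτ z hzE hzM, hσ z hzE hzM]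
  inv_mem' := by
    intro σ hσ z hzE hzM
    show σ.symm ⟨z, hzM⟩ = ⟨z, hzM⟩
    conv_lhs => rw [← hσ z hzE hzM]
    exact σ.symm_apply_apply _

/-- The Galois group `G_x = Gal(k(𝒪)|k(x))`. -/
def Gx (St : Finset (ℤ × ℤ)) (w : ℤ × ℤ → ℂ) (x y : K) :
    Subgroup (↥(orbitF St w x y) ≃ₐ[ℂ] ↥(orbitF St w x y)) :=
  fixingAuts (kxF St w x y) (orbitF St w x y)

/-- The Galois group `G_y = Gal(k(𝒪)|k(y))`. -/
def Gy (St : Finset (ℤ × ℤ)) (w : ℤ × ℤ → ℂ) (x y : K) :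
    Subgroup (↥(orbitF St w x y) ≃ₐ[ℂ] ↥(orbitF St w x y)) :=
  fixingAuts (kyF St w x y) (orbitF St w x y)

/-- The Galois group `G_{xy} = Gal(k(𝒪)|k(x,y))`. -/
def Gxy (St : Finset (ℤ × ℤ)) (w : ℤ × ℤ → ℂ) (x y : K) :
    Subgroup (↥(orbitF St w x y) ≃ₐ[ℂ] ↥(orbitF St w x y)) :=
  fixingAuts (kxyF x y) (orbitF St w x y)

/-- Extend an automorphism of an intermediate field to a map on all of `K`
(by the identity outside). -/
def extendAut {M : IntermediateField ℂ K} (σ : ↥M ≃ₐ[ℂ] ↥M) (z : K) : K :=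
  if h : z ∈ M then (σ ⟨z, h⟩ : K) else z

/-- The coordinate-wise action of an automorphism on a `0`-chain. -/
def actChain {M : IntermediateField ℂ K} (σ : ↥M ≃ₐ[ℂ] ↥M)
    (γ : (K × K) →₀ ℂ) : (K × K) →₀ ℂ :=
  Finsupp.mapDomain (Prod.map (extendAut σ) (extendAut σ)) γ

/-- Evaluation of a polynomial `P(X,Y,t)` at `(u, v, 1/S(x,y))` for `(u,v) = a`. -/
def evalPt (St : Finset (ℤ × ℤ)) (w : ℤ × ℤ → ℂ) (x y : K)
    (P : MvPolynomial (Fin 3) ℂ) (a : K × K) : K :=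
  MvPolynomial.aeval ![a.1, a.2, (stepEval St w x y)⁻¹] P

/-- Evaluation of a polynomial `P(X,Y,t)` at `(x, y, 1/S(x,y))`. -/
def evalXY (St : Finset (ℤ × ℤ)) (w : ℤ × ℤ → ℂ) (x y : K)
    (P : MvPolynomial (Fin 3) ℂ) : K :=
  evalPt St w x y P (x, y)

/-- Evaluation of the fraction `A/B` at `(a.1, a.2, 1/S(x,y))`. -/
def fracEval (St : Finset (ℤ × ℤ)) (w : ℤ × ℤ → ℂ) (x y : K)
    (A B : MvPolynomial (Fin 3) ℂ) (a : K × K) : K :=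
  evalPt St w x y A a / evalPt St w x y B a

/-- Evaluation (orbit sum) of the fraction `A/B` on a `0`-chain. -/
def chainEval (St : Finset (ℤ × ℤ)) (w : ℤ × ℤ → ℂ) (x y : K)
    (A B : MvPolynomial (Fin 3) ℂ) (γ : (K × K) →₀ ℂ) : K :=
  γ.sum fun a c => algebraMap ℂ K c * fracEval St w x y A B a

/-- A `0`-chain cancels decoupled fractions: the orbit sum of every regular fraction
of the form `F(X,t) + G(Y,t)` on it vanishes. -/
def CancelsDecoupled (St : Finset (ℤ × ℤ)) (w : ℤ × ℤ → ℂ) (mx my : ℕ)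
    (x y : K) (α : (K × K) →₀ ℂ) : Prop :=
  ∀ A₁ B₁ A₂ B₂ : MvPolynomial (Fin 3) ℂ,
    A₁ ∈ MvPolynomial.supported ℂ ({0, 2} : Set (Fin 3)) →
    B₁ ∈ MvPolynomial.supported ℂ ({0, 2} : Set (Fin 3)) →
    A₂ ∈ MvPolynomial.supported ℂ ({1, 2} : Set (Fin 3)) →
    B₂ ∈ MvPolynomial.supported ℂ ({1, 2} : Set (Fin 3)) →
    ¬ kernelPoly St w mx my ∣ B₁ → ¬ kernelPoly St w mx my ∣ B₂ →
    (α.sum fun a c =>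
      algebraMap ℂ K c * (fracEval St w x y A₁ B₁ a + fracEval St w x y A₂ B₂ a)) = 0

/-- The field of fractions `ℂ(X,Y,t)`. -/
abbrev FF : Type := FractionRing (MvPolynomial (Fin 3) ℂ)

/-- The inclusion of `ℂ[X,Y,t]` into `ℂ(X,Y,t)`. -/
def toFF (P : MvPolynomial (Fin 3) ℂ) : FF := algebraMap (MvPolynomial (Fin 3) ℂ) FF P

/-- The regular fraction `A/B` admits a Galois decoupling:
`A/B = F + G + K̃·R` with `F ∈ ℂ(X,t)`, `G ∈ ℂ(Y,t)` and `R` regular. -/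
def AdmitsDecoupling (St : Finset (ℤ × ℤ)) (w : ℤ × ℤ → ℂ) (mx my : ℕ)
    (A B : MvPolynomial (Fin 3) ℂ) : Prop :=
  ∃ F₁ F₂ G₁ G₂ R₁ R₂ : MvPolynomial (Fin 3) ℂ,
    F₁ ∈ MvPolynomial.supported ℂ ({0, 2} : Set (Fin 3)) ∧
    F₂ ∈ MvPolynomial.supported ℂ ({0, 2} : Set (Fin 3)) ∧
    G₁ ∈ MvPolynomial.supported ℂ ({1, 2} : Set (Fin 3)) ∧
    G₂ ∈ MvPolynomial.supported ℂ ({1, 2} : Set (Fin 3)) ∧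
    ¬ kernelPoly St w mx my ∣ F₂ ∧ ¬ kernelPoly St w mx my ∣ G₂ ∧
    ¬ kernelPoly St w mx my ∣ R₂ ∧
    toFF A / toFF B =
      toFF F₁ / toFF F₂ + toFF G₁ / toFF G₂ +
        toFF (kernelPoly St w mx my) * (toFF R₁ / toFF R₂)

/-- `(I, J) = (A/B, Cc/D)` is a pair of Galois invariants: `I - J = K̃·R` with `R` regular. -/
def IsInvariantPair (St : Finset (ℤ × ℤ)) (w : ℤ × ℤ → ℂ) (mx my : ℕ)
    (A B Cc D : MvPolynomial (Fin 3) ℂ) : Prop :=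
  ∃ R₁ R₂ : MvPolynomial (Fin 3) ℂ, ¬ kernelPoly St w mx my ∣ R₂ ∧
    toFF A / toFF B - toFF Cc / toFF D =
      toFF (kernelPoly St w mx my) * (toFF R₁ / toFF R₂)

/-- A constant pair of Galois invariants: both members are equivalent to a
common fraction `c ∈ ℂ(t)` modulo `K̃`. -/
def IsConstantPair (St : Finset (ℤ × ℤ)) (w : ℤ × ℤ → ℂ) (mx my : ℕ)
    (A B Cc D : MvPolynomial (Fin 3) ℂ) : Prop :=
  IsInvariantPair St w mx my A B Cc D ∧
  ∃ c₁ c₂ : MvPolynomial (Fin 3) ℂ,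
    c₁ ∈ MvPolynomial.supported ℂ ({2} : Set (Fin 3)) ∧
    c₂ ∈ MvPolynomial.supported ℂ ({2} : Set (Fin 3)) ∧ c₂ ≠ 0 ∧
    IsInvariantPair St w mx my A B c₁ c₂ ∧ IsInvariantPair St w mx my Cc D c₁ c₂

/-- `(γx, γy)` is a pseudo-decoupling of `(x,y)`. -/
def PseudoDecoupling (St : Finset (ℤ × ℤ)) (w : ℤ × ℤ → ℂ) (mx my : ℕ)
    (x y : K) (γx γy : (K × K) →₀ ℂ) : Prop :=
  ∀ A B : MvPolynomial (Fin 3) ℂ, ¬ kernelPoly St w mx my ∣ B →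
    AdmitsDecoupling St w mx my A B →
      fracEval St w x y A B (x, y) =
          chainEval St w x y A B γx + chainEval St w x y A B γy ∧
        chainEval St w x y A B γx ∈ kxF St w x y ∧
        chainEval St w x y A B γy ∈ kyF St w x y

/-- `(gx, gy, a)` is a decoupling of `(x,y)` in the orbit. -/
def IsDecoupling (St : Finset (ℤ × ℤ)) (w : ℤ × ℤ → ℂ) (mx my : ℕ)
    (x y : K) (gx gy a : (K × K) →₀ ℂ) : Prop :=
  Finsupp.single (x, y) (1 : ℂ) = gx + gy + a ∧
  (∀ σ ∈ Gx St w x y, actChain σ gx = gx) ∧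
  (∀ σ ∈ Gy St w x y, actChain σ gy = gy) ∧
  CancelsDecoupled St w mx my x y a

/-- The `x`-part of the boundary of a `1`-chain. -/
def boundaryX (St : Finset (ℤ × ℤ)) (w : ℤ × ℤ → ℂ)
    (c : ((K × K) × (K × K)) →₀ ℂ) : (K × K) →₀ ℂ :=
  c.sum fun e coeff =>
    if XAdj St w e.1 e.2 then
      coeff • (Finsupp.single e.2 (1 : ℂ) - Finsupp.single e.1 (1 : ℂ)) else 0

/-- The `y`-part of the boundary of a `1`-chain. -/
def boundaryY (St : Finset (ℤ × ℤ)) (w : ℤ × ℤ → ℂ)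
    (c : ((K × K) × (K × K)) →₀ ℂ) : (K × K) →₀ ℂ :=
  c.sum fun e coeff =>
    if YAdj St w e.1 e.2 then
      coeff • (Finsupp.single e.2 (1 : ℂ) - Finsupp.single e.1 (1 : ℂ)) else 0

/-- The `0`-chain induced by a bicolored loop. -/
def IsBicoloredChain (St : Finset (ℤ × ℤ)) (w : ℤ × ℤ → ℂ) (x y : K)
    (α : (K × K) →₀ ℂ) : Prop :=
  ∃ (n : ℕ) (b : ℕ → K × K), 0 < n ∧ b (2 * n) = b 0 ∧
    (∀ j < 2 * n, b j ∈ orbit St w x y) ∧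
    (∀ i < n, XAdj St w (b (2 * i)) (b (2 * i + 1)) ∧
      YAdj St w (b (2 * i + 1)) (b (2 * i + 2))) ∧
    α = ∑ j ∈ Finset.range (2 * n), ((-1 : ℂ) ^ (j + 1)) • Finsupp.single (b j) (1 : ℂ)

/-- The `0`-chain `ω = (1/|𝒪|) ∑_{a ∈ 𝒪} a`. -/
def omegaChain (St : Finset (ℤ × ℤ)) (w : ℤ × ℤ → ℂ) (x y : K)
    (h : (orbit St w x y).Finite) : (K × K) →₀ ℂ :=
  ((h.toFinset.card : ℂ))⁻¹ • ∑ a ∈ h.toFinset, Finsupp.single a (1 : ℂ)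

/-- The average `[G]·γ = (1/|G|) ∑_{σ ∈ G} σ·γ` of a `0`-chain under a group. -/
def groupAverage {M : IntermediateField ℂ K} (G : Subgroup (↥M ≃ₐ[ℂ] ↥M))
    (γ : (K × K) →₀ ℂ) : (K × K) →₀ ℂ :=
  ((Nat.card G : ℂ))⁻¹ • ∑ᶠ σ ∈ (G : Set (↥M ≃ₐ[ℂ] ↥M)), actChain σ γ

/-- `ℂ[X,t]` (two variables: `0` and `1`). -/
abbrev MvP2 : Type := MvPolynomial (Fin 2) ℂ

/-- `ℂ(X,t)`, the fraction field of `ℂ[X,t]`. -/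
abbrev CXt : Type := FractionRing MvP2

/-- Constants `ℂ → ℂ(X,t)`. -/
def cconst : ℂ →+* CXt := (algebraMap MvP2 CXt).comp (MvPolynomial.C)

/-- The first generator of `ℂ(X,t)`. -/
def gen0 : CXt := algebraMap MvP2 CXt (MvPolynomial.X 0)

/-- The second generator of `ℂ(X,t)`. -/
def gen1 : CXt := algebraMap MvP2 CXt (MvPolynomial.X 1)

/-- The kernel polynomial viewed as a polynomial in `Y` over `ℂ(X,t)`. -/
def kernelInY (St : Finset (ℤ × ℤ)) (w : ℤ × ℤ → ℂ) (mx my : ℕ) :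
    Polynomial CXt :=
  MvPolynomial.eval₂ ((Polynomial.C : CXt →+* Polynomial CXt).comp cconst)
    ![Polynomial.C gen0, Polynomial.X, Polynomial.C gen1]
    (kernelPoly St w mx my)

/-- The kernel polynomial viewed as a polynomial in `X` over `ℂ(Y,t)`. -/
def kernelInX (St : Finset (ℤ × ℤ)) (w : ℤ × ℤ → ℂ) (mx my : ℕ) :
    Polynomial CXt :=
  MvPolynomial.eval₂ ((Polynomial.C : CXt →+* Polynomial CXt).comp cconst)
    ![Polynomial.X, Polynomial.C gen0, Polynomial.C gen1]
    (kernelPoly St w mx my)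

/-- The kernel polynomial viewed as a polynomial in `X, Y` over `ℂ(t)`. -/
def kernelInXY (St : Finset (ℤ × ℤ)) (w : ℤ × ℤ → ℂ) (mx my : ℕ) :
    MvPolynomial (Fin 2) (RatFunc ℂ) :=
  MvPolynomial.eval₂
    ((MvPolynomial.C : RatFunc ℂ →+* MvPolynomial (Fin 2) (RatFunc ℂ)).comp
      (RatFunc.C : ℂ →+* RatFunc ℂ))
    ![MvPolynomial.X 0, MvPolynomial.X 1, MvPolynomial.C RatFunc.X]
    (kernelPoly St w mx my)

/-- The specialization `K̃(x, Y, 1/S(x,y))` as a polynomial in `Y` over `k(x)`. -/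
def kernelAtX (St : Finset (ℤ × ℤ)) (w : ℤ × ℤ → ℂ) (mx my : ℕ) (x y : K) :
    Polynomial ↥(kxF St w x y) :=
  MvPolynomial.aeval
    ![Polynomial.C (⟨x, x_mem_kxF St w x y⟩ : kxF St w x y), Polynomial.X,
      Polynomial.C (⟨(stepEval St w x y)⁻¹, inv_mem (S_mem_kxF St w x y)⟩ : kxF St w x y)]
    (kernelPoly St w mx my)

/-- The specialization `K̃(X, y, 1/S(x,y))` as a polynomial in `X` over `k(y)`. -/
def kernelAtY (St : Finset (ℤ × ℤ)) (w : ℤ × ℤ → ℂ) (mx my : ℕ) (x y : K) :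
    Polynomial ↥(kyF St w x y) :=
  MvPolynomial.aeval
    ![Polynomial.X, Polynomial.C (⟨y, y_mem_kyF St w x y⟩ : kyF St w x y),
      Polynomial.C (⟨(stepEval St w x y)⁻¹, inv_mem (S_mem_kyF St w x y)⟩ : kyF St w x y)]
    (kernelPoly St w mx my)

/-- Values of regular fractions with numerator and denominator supported on a set
of variables. -/
def regRange (St : Finset (ℤ × ℤ)) (w : ℤ × ℤ → ℂ) (x y : K) (mx my : ℕ)
    (s : Set (Fin 3)) : Set K :=
  {z | ∃ A B : MvPolynomial (Fin 3) ℂ,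
    A ∈ MvPolynomial.supported ℂ s ∧ B ∈ MvPolynomial.supported ℂ s ∧
    ¬ kernelPoly St w mx my ∣ B ∧ z = evalXY St w x y A / evalXY St w x y B}

end QuadrantWalk
namespace QuadrantWalk

section KernelEvaluation

open MvPolynomial

/-- The exponent of the monomial `X^(i+mx) * Y^(j+my)` attached to the step `(i,j)`. -/
def stepExp (mx my : ℕ) (p : ℤ × ℤ) : Fin 2 →₀ ℕ :=
  Finsupp.single 0 (p.1 + (mx : ℤ)).toNat + Finsupp.single 1 (p.2 + (my : ℤ)).toNat

/-- The polynomial `X^mx * Y^my * S(X,Y)` of `ℂ[X,Y]`. -/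
def stepNum (St : Finset (ℤ × ℤ)) (w : ℤ × ℤ → ℂ) (mx my : ℕ) : MvPolynomial (Fin 2) ℂ :=
  ∑ p ∈ St, monomial (stepExp mx my p) (w p)

/-- The inclusion of `ℂ[X,Y]` into `ℂ[X,Y,t]`. -/
def inclXY : MvPolynomial (Fin 2) ℂ →ₐ[ℂ] MvPolynomial (Fin 3) ℂ :=
  rename Fin.castSucc

lemma stepExp_zero (mx my : ℕ) (p : ℤ × ℤ) :
    stepExp mx my p 0 = (p.1 + (mx : ℤ)).toNat := by
  simp [stepExp]

lemma stepExp_one (mx my : ℕ) (p : ℤ × ℤ) :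
    stepExp mx my p 1 = (p.2 + (my : ℤ)).toNat := by
  simp [stepExp]

lemma inclXY_X_zero : inclXY (X 0) = X 0 := rename_X _ _

lemma inclXY_X_one : inclXY (X 1) = X 1 := rename_X _ _

lemma aeval_inclXY {K : Type} [Field K] [Algebra ℂ K] (x y z : K)
    (q : MvPolynomial (Fin 2) ℂ) :
    aeval ![x, y, z] (inclXY q) = aeval ![x, y] q := by
  rw [inclXY, aeval_rename]
  congr 2
  funext i
  fin_cases i <;> rfl

lemma kernelPoly_eq (St : Finset (ℤ × ℤ)) (w : ℤ × ℤ → ℂ) (mx my : ℕ) :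
    kernelPoly St w mx my =
      inclXY (X 0 ^ mx * X 1 ^ my) - X 2 * inclXY (stepNum St w mx my) := by
  simp only [kernelPoly, stepNum, map_mul, map_pow, map_sum, inclXY_X_zero, inclXY_X_one]
  congr 2
  refine Finset.sum_congr rfl fun p _ => ?_
  have h : (monomial (stepExp mx my p) (w p) : MvPolynomial (Fin 2) ℂ) =
      C (w p) * X 0 ^ (p.1 + (mx : ℤ)).toNat * X 1 ^ (p.2 + (my : ℤ)).toNat := by
    rw [stepExp, C_mul_X_pow_eq_monomial, X_pow_eq_monomial, monomial_mul, mul_one]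
  rw [h]
  simp only [map_mul, map_pow, inclXY_X_zero, inclXY_X_one]
  rw [inclXY, rename_C]

variable {St : Finset (ℤ × ℤ)} {w : ℤ × ℤ → ℂ} {mx my : ℕ}

lemma coeff_stepNum (hb : ExponentBounds St mx my) {q : ℤ × ℤ} (hq : q ∈ St) :
    coeff (stepExp mx my q) (stepNum St w mx my) = w q := by
  rw [stepNum, coeff_sum, Finset.sum_eq_single_of_mem q hq, coeff_monomial, if_pos rfl]
  intro p hp hpq
  rw [coeff_monomial, if_neg]
  intro h
  have h0 := DFunLike.congr_fun h 0
  have h1 := DFunLike.congr_fun h 1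
  rw [stepExp_zero, stepExp_zero] at h0
  rw [stepExp_one, stepExp_one] at h1
  have := hb.lowerX p hp
  have := hb.lowerX q hq
  have := hb.lowerY p hp
  have := hb.lowerY q hq
  exact hpq (Prod.ext (by omega) (by omega))

lemma stepNum_ne_zero (hb : ExponentBounds St mx my) (hw : ∀ p ∈ St, w p ≠ 0) :
    stepNum St w mx my ≠ 0 := by
  obtain ⟨q, hq, -⟩ := hb.attainX
  intro h
  apply hw q hq
  rw [← coeff_stepNum (w := w) hb hq, h, coeff_zero]

lemma not_X_dvd_inclXY {i : Fin 2} {q : MvPolynomial (Fin 2) ℂ} {e : Fin 2 →₀ ℕ}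
    (he : e i = 0) (hq : coeff e q ≠ 0) :
    ¬ (X i.castSucc : MvPolynomial (Fin 3) ℂ) ∣ inclXY q := by
  rintro ⟨r, hr⟩
  apply hq
  have h := coeff_rename_mapDomain Fin.castSucc (Fin.castSucc_injective 2) q e
  change coeff _ (inclXY q) = _ at h
  rw [← h, hr, coeff_X_mul', if_neg]
  rw [Finsupp.notMem_support_iff, Finsupp.mapDomain_apply (Fin.castSucc_injective 2), he]

lemma isRelPrime_kernelPoly_stepNum (hb : ExponentBounds St mx my)
    (hw : ∀ p ∈ St, w p ≠ 0) :
    IsRelPrime (kernelPoly St w mx my) (inclXY (stepNum St w mx my)) := by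
  have hX : ∀ (i : Fin 2) (n : ℕ) (q : ℤ × ℤ), q ∈ St → stepExp mx my q i = 0 →
      IsRelPrime (X i.castSucc ^ n : MvPolynomial (Fin 3) ℂ)
        (inclXY (stepNum St w mx my)) := by
    intro i n q hq hi
    refine IsRelPrime.pow_left ((X_prime (i := i.castSucc)).irreducible.isRelPrime_iff_not_dvd.2 ?_)
    exact not_X_dvd_inclXY hi (by rw [coeff_stepNum hb hq]; exact hw q hq)
  obtain ⟨p, hp, hp0⟩ := hb.attainX
  obtain ⟨q, hq, hq0⟩ := hb.attainY
  have h0 := hX 0 mx p hp (by rw [stepExp_zero]; omega)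
  have h1 := hX 1 my q hq (by rw [stepExp_one]; omega)
  have hM : IsRelPrime (inclXY (X 0 ^ mx * X 1 ^ my)) (inclXY (stepNum St w mx my)) := by
    rw [map_mul, map_pow, map_pow, inclXY_X_zero, inclXY_X_one]
    exact h0.mul_left h1
  intro d hdK hdN
  refine hM ?_ hdN
  rw [kernelPoly_eq] at hdK
  simpa using dvd_add hdK (hdN.mul_left (X 2))

lemma degreeOf_kernelPoly_ne_zero (hb : ExponentBounds St mx my) (hw : ∀ p ∈ St, w p ≠ 0)
    {i : Fin 2} {q : ℤ × ℤ} (hq : q ∈ St) (hi : stepExp mx my q i ≠ 0) :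
    degreeOf i.castSucc (kernelPoly St w mx my) ≠ 0 := by
  have hcoeff : coeff (Finsupp.single 2 1 + (stepExp mx my q).mapDomain Fin.castSucc)
      (kernelPoly St w mx my) = - w q := by
    have h := coeff_rename_mapDomain Fin.castSucc (Fin.castSucc_injective 2)
      (stepNum St w mx my) (stepExp mx my q)
    rw [kernelPoly_eq, coeff_sub, coeff_X_mul, inclXY, h, coeff_stepNum hb hq,
      coeff_rename_eq_zero, zero_sub]
    intro u hu
    have h2 := DFunLike.congr_fun hu 2
    have hr : (2 : Fin 3) ∉ Set.range (Fin.castSucc : Fin 2 → Fin 3) := by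
      rintro ⟨j, hj⟩
      fin_cases j <;> simp at hj
    rw [Finsupp.add_apply, Finsupp.mapDomain_of_notMem_range _ _ hr,
      Finsupp.mapDomain_of_notMem_range _ _ hr] at h2
    simp at h2
  have hmem : Finsupp.single 2 1 + (stepExp mx my q).mapDomain Fin.castSucc ∈
      (kernelPoly St w mx my).support := by
    rw [mem_support_iff, hcoeff]
    exact neg_ne_zero.2 (hw q hq)
  have hle := monomial_le_degreeOf i.castSucc hmem
  rw [Finsupp.add_apply, Finsupp.mapDomain_apply (Fin.castSucc_injective 2)] at hle
  omega

lemma exists_stepExp_ne_zero (hb : ExponentBounds St mx my) (hn : NotUnivariate St)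
    (i : Fin 2) : ∃ q ∈ St, stepExp mx my q i ≠ 0 := by
  obtain ⟨⟨p, hp, q, hq, hpq⟩, ⟨p', hp', q', hq', hpq'⟩⟩ := hn
  by_contra! h
  fin_cases i
  · have h1 := h p hp
    have h2 := h q hq
    simp only [Fin.zero_eta, stepExp_zero] at h1 h2
    have := hb.lowerX p hp
    have := hb.lowerX q hq
    omega
  · have h1 := h p' hp'
    have h2 := h q' hq'
    simp only [Fin.mk_one, stepExp_one] at h1 h2
    have := hb.lowerY p' hp'
    have := hb.lowerY q' hq'
    omega

/-- A nonzero polynomial not involving one of `X`, `Y` is not a multiple of `K̃`. -/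
lemma not_kernelPoly_dvd (hb : ExponentBounds St mx my) (hw : ∀ p ∈ St, w p ≠ 0)
    (hn : NotUnivariate St) {i : Fin 2} {s : Set (Fin 3)} (hi : i.castSucc ∉ s)
    {B : MvPolynomial (Fin 3) ℂ} (hB : B ∈ supported ℂ s) (hB0 : B ≠ 0) :
    ¬ kernelPoly St w mx my ∣ B := by
  rintro ⟨r, rfl⟩
  obtain ⟨q, hq, hqi⟩ := exists_stepExp_ne_zero hb hn i
  have hK := degreeOf_kernelPoly_ne_zero hb hw hq hqi
  have hdeg : degreeOf i.castSucc (kernelPoly St w mx my * r) = 0 := by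
    by_contra h
    exact hi (mem_supported.1 hB (mem_vars_iff_degreeOf_ne_zero.2 h))
  rw [degreeOf_mul_eq (left_ne_zero_of_mul hB0) (right_ne_zero_of_mul hB0)] at hdeg
  omega

/-- Modulo `K̃`, the variable `t` can be eliminated at the cost of a power of `X^mx * Y^my * S`. -/
lemma exists_kernelPoly_dvd_pow_mul_sub (St : Finset (ℤ × ℤ)) (w : ℤ × ℤ → ℂ) (mx my : ℕ)
    (Q : MvPolynomial (Fin 3) ℂ) :
    ∃ (d : ℕ) (q : MvPolynomial (Fin 2) ℂ),
      kernelPoly St w mx my ∣ inclXY (stepNum St w mx my) ^ d * Q - inclXY q := by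
  induction Q using MvPolynomial.induction_on with
  | C a => exact ⟨0, C a, by simp [inclXY]⟩
  | add Q₁ Q₂ h₁ h₂ =>
    obtain ⟨d₁, q₁, r₁, h₁⟩ := h₁
    obtain ⟨d₂, q₂, r₂, h₂⟩ := h₂
    refine ⟨d₁ + d₂, stepNum St w mx my ^ d₂ * q₁ + stepNum St w mx my ^ d₁ * q₂,
      inclXY (stepNum St w mx my) ^ d₂ * r₁ + inclXY (stepNum St w mx my) ^ d₁ * r₂, ?_⟩
    simp only [map_add, map_mul, map_pow]
    linear_combination inclXY (stepNum St w mx my) ^ d₂ * h₁ +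
      inclXY (stepNum St w mx my) ^ d₁ * h₂
  | mul_X Q i h =>
    obtain ⟨d, q, r, h⟩ := h
    fin_cases i
    · refine ⟨d, q * X 0, r * X 0, ?_⟩
      simp only [map_mul, inclXY_X_zero, Fin.zero_eta]
      linear_combination X 0 * h
    · refine ⟨d, q * X 1, r * X 1, ?_⟩
      simp only [map_mul, inclXY_X_one, Fin.mk_one]
      linear_combination X 1 * h
    · refine ⟨d + 1, q * (X 0 ^ mx * X 1 ^ my),
        X 2 * inclXY (stepNum St w mx my) * r - inclXY q, ?_⟩
      have hK := kernelPoly_eq St w mx my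
      rw [map_mul inclXY q]
      change _ ^ _ * (Q * X 2) - _ = _
      linear_combination X 2 * inclXY (stepNum St w mx my) * h + inclXY q * hK

variable {K : Type} [Field K] [Algebra ℂ K] {x y : K}

lemma aeval_stepNum (hb : ExponentBounds St mx my) (w : ℤ × ℤ → ℂ) (hx : x ≠ 0)
    (hy : y ≠ 0) :
    aeval ![x, y] (stepNum St w mx my) = x ^ mx * y ^ my * stepEval St w x y := by
  rw [stepNum, map_sum, stepEval, Finset.mul_sum]
  refine Finset.sum_congr rfl fun p hp => ?_
  have hpx : x ^ (p.1 + (mx : ℤ)).toNat = x ^ p.1 * x ^ mx := by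
    rw [← zpow_natCast, Int.toNat_of_nonneg (by linarith [hb.lowerX p hp]), zpow_add₀ hx,
      zpow_natCast]
  have hpy : y ^ (p.2 + (my : ℤ)).toNat = y ^ p.2 * y ^ my := by
    rw [← zpow_natCast, Int.toNat_of_nonneg (by linarith [hb.lowerY p hp]), zpow_add₀ hy,
      zpow_natCast]
  rw [aeval_monomial, Finsupp.prod_fintype _ _ (fun _ => pow_zero _), Fin.prod_univ_two,
    stepExp_zero, stepExp_one]
  simp only [Matrix.cons_val_zero, Matrix.cons_val_one, hpx, hpy]
  ring

/-- Evaluation at `(x, y, 1/S(x,y))` as an algebra homomorphism. -/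
lemma evalXY_eq_aeval (St : Finset (ℤ × ℤ)) (w : ℤ × ℤ → ℂ) (x y : K)
    (Q : MvPolynomial (Fin 3) ℂ) :
    evalXY St w x y Q = aeval ![x, y, (stepEval St w x y)⁻¹] Q := rfl

/-- `K̃` generates the ideal of relations between `x`, `y` and `1/S(x,y)`. -/
lemma evalXY_eq_zero_iff (hset : Setting St w x y) (hb : ExponentBounds St mx my)
    (Q : MvPolynomial (Fin 3) ℂ) :
    evalXY St w x y Q = 0 ↔ kernelPoly St w mx my ∣ Q := by
  have hinj : ∀ q : MvPolynomial (Fin 2) ℂ, aeval ![x, y] q = 0 → q = 0 :=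
    fun q hq => hset.indep.eq_zero_of_aeval_eq_zero q hq
  have hx : x ≠ 0 := hset.indep.ne_zero 0
  have hy : y ≠ 0 := hset.indep.ne_zero 1
  have hN : aeval ![x, y] (stepNum St w mx my) ≠ 0 :=
    fun h => stepNum_ne_zero hb hset.weight_ne (hinj _ h)
  have hS : stepEval St w x y ≠ 0 := by
    rw [aeval_stepNum hb w hx hy] at hN
    exact right_ne_zero_of_mul hN
  have hK : evalXY St w x y (kernelPoly St w mx my) = 0 := by
    rw [evalXY_eq_aeval, kernelPoly_eq, map_sub, aeval_inclXY, map_mul _ (X 2),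
      aeval_inclXY, aeval_stepNum hb w hx hy, aeval_X]
    simp only [map_mul, map_pow, aeval_X, Matrix.cons_val_zero, Matrix.cons_val_one,
      Matrix.cons_val]
    field_simp
    ring
  constructor
  · intro hQ
    obtain ⟨d, q, hq⟩ := exists_kernelPoly_dvd_pow_mul_sub St w mx my Q
    have hq0 : q = 0 := by
      obtain ⟨r, hr⟩ := hq
      apply hinj
      have h := congrArg (evalXY St w x y) hr
      simp only [evalXY_eq_aeval, map_sub, map_mul, aeval_inclXY] at h hK hQ
      rw [hK, hQ] at h
      simpa using h
    rw [hq0, map_zero, sub_zero] at hq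
    exact IsRelPrime.dvd_of_dvd_mul_left
      (isRelPrime_kernelPoly_stepNum hb hset.weight_ne).pow_right hq
  · rintro ⟨r, rfl⟩
    rw [evalXY_eq_aeval] at hK ⊢
    rw [map_mul, hK, zero_mul]

/-- Equivalence of regular fractions modulo `K̃` is equality of evaluations. -/
lemma isInvariantPair_iff (hset : Setting St w x y) (hb : ExponentBounds St mx my)
    {A B Cc D : MvPolynomial (Fin 3) ℂ} (hB : ¬ kernelPoly St w mx my ∣ B)
    (hD : ¬ kernelPoly St w mx my ∣ D) :
    IsInvariantPair St w mx my A B Cc D ↔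
      evalXY St w x y A / evalXY St w x y B = evalXY St w x y Cc / evalXY St w x y D := by
  have hne : ∀ {P : MvPolynomial (Fin 3) ℂ}, ¬ kernelPoly St w mx my ∣ P →
      evalXY St w x y P ≠ 0 := fun hP h => hP ((evalXY_eq_zero_iff hset hb _).1 h)
  have hinj : Function.Injective toFF :=
    IsFractionRing.injective (MvPolynomial (Fin 3) ℂ) FF
  have hff : ∀ {P : MvPolynomial (Fin 3) ℂ}, ¬ kernelPoly St w mx my ∣ P → toFF P ≠ 0 := by
    intro P hP h
    have hP0 : P = 0 := hinj (h.trans (map_zero (algebraMap _ FF)).symm)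
    exact hP (hP0 ▸ dvd_zero _)
  have hmul : ∀ P Q, toFF (P * Q) = toFF P * toFF Q := map_mul (algebraMap _ FF)
  have hsub : ∀ P Q, toFF (P - Q) = toFF P - toFF Q := map_sub (algebraMap _ FF)
  have emul : ∀ P Q, evalXY St w x y (P * Q) = evalXY St w x y P * evalXY St w x y Q :=
    map_mul (aeval ![x, y, (stepEval St w x y)⁻¹])
  have esub : ∀ P Q, evalXY St w x y (P - Q) = evalXY St w x y P - evalXY St w x y Q :=
    map_sub (aeval ![x, y, (stepEval St w x y)⁻¹])
  rw [div_eq_div_iff (hne hB) (hne hD), ← sub_eq_zero]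
  constructor
  · rintro ⟨R₁, R₂, hR, h⟩
    rw [div_sub_div _ _ (hff hB) (hff hD), ← mul_div_assoc,
      div_eq_div_iff (mul_ne_zero (hff hB) (hff hD)) (hff hR)] at h
    simp only [← hmul, ← hsub] at h
    have h' := congrArg (evalXY St w x y) (hinj h)
    have hK := (evalXY_eq_zero_iff hset hb (kernelPoly St w mx my)).2 dvd_rfl
    simp only [emul, esub, hK, zero_mul] at h'
    have := (mul_eq_zero.1 h').resolve_right (hne hR)
    linear_combination this
  · intro h
    have h0 : evalXY St w x y (A * D - B * Cc) = 0 := by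
      rw [esub, emul, emul]
      linear_combination h
    obtain ⟨R, hR⟩ := (evalXY_eq_zero_iff hset hb _).1 h0
    refine ⟨R, B * D, fun hdvd => ?_, ?_⟩
    · rw [← evalXY_eq_zero_iff hset hb, emul] at hdvd
      exact mul_ne_zero (hne hB) (hne hD) hdvd
    · rw [div_sub_div _ _ (hff hB) (hff hD), ← mul_div_assoc, ← hmul, ← hmul, ← hsub, ← hmul,
        ← hmul, hR]

lemma evalXY_mem {s : Set (Fin 3)} {E : IntermediateField ℂ K}
    (hE : ∀ i ∈ s, ![x, y, (stepEval St w x y)⁻¹] i ∈ E) {P : MvPolynomial (Fin 3) ℂ}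
    (hP : P ∈ supported ℂ s) : evalXY St w x y P ∈ E := by
  have hle : supported ℂ s ≤
      E.toSubalgebra.comap (aeval ![x, y, (stepEval St w x y)⁻¹]) := by
    refine Algebra.adjoin_le ?_
    rintro _ ⟨i, hi, rfl⟩
    simpa using hE i hi
  exact hle hP

lemma exists_evalXY_of_mem_kF {z : K} (hz : z ∈ kF St w x y) :
    ∃ c₁ c₂ : MvPolynomial (Fin 3) ℂ, c₁ ∈ supported ℂ ({2} : Set (Fin 3)) ∧
      c₂ ∈ supported ℂ ({2} : Set (Fin 3)) ∧ c₂ ≠ 0 ∧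
      z = evalXY St w x y c₁ / evalXY St w x y c₂ := by
  have hz' : z ∈ adjoin ℂ {(stepEval St w x y)⁻¹} := by
    have hle : kF St w x y ≤ adjoin ℂ {(stepEval St w x y)⁻¹} := by
      rw [kF, adjoin_simple_le_iff]
      simpa using inv_mem (mem_adjoin_simple_self ℂ (stepEval St w x y)⁻¹)
    exact hle hz
  obtain ⟨r, s, hrs⟩ := (mem_adjoin_simple_iff ℂ z).1 hz'
  have hsupp : ∀ p : Polynomial ℂ, Polynomial.aeval (X 2 : MvPolynomial (Fin 3) ℂ) p ∈
      supported ℂ ({2} : Set (Fin 3)) := by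
    intro p
    have h2 : (X 2 : MvPolynomial (Fin 3) ℂ) ∈ supported ℂ ({2} : Set (Fin 3)) :=
      X_mem_supported.2 rfl
    exact Subalgebra.aeval_coe (supported ℂ ({2} : Set (Fin 3))) ⟨X 2, h2⟩ p ▸ Subtype.coe_prop _
  have heval : ∀ p : Polynomial ℂ,
      evalXY St w x y (Polynomial.aeval (X 2 : MvPolynomial (Fin 3) ℂ) p) =
        Polynomial.aeval (stepEval St w x y)⁻¹ p := by
    intro p
    rw [evalXY_eq_aeval, ← Polynomial.aeval_algHom_apply, aeval_X]
    rfl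
  by_cases hs : s = 0
  · refine ⟨0, 1, zero_mem _, one_mem _, one_ne_zero, ?_⟩
    rw [hrs, hs, evalXY_eq_aeval, map_zero, map_zero, div_zero, zero_div]
  · refine ⟨Polynomial.aeval (X 2) r, Polynomial.aeval (X 2) s, hsupp r, hsupp s, ?_, ?_⟩
    · exact fun h => hs (transcendental_iff.1 (transcendental_X ℂ (2 : Fin 3)) s h)
    · rw [heval, heval, hrs]

end KernelEvaluation

/-- a pair `(I(X,t), J(Y,t))` is a pair of Galois invariants iff the
evaluations `I(x,1/S(x,y))` and `J(y,1/S(x,y))` are equal; in that case, the common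
value lies in `k(x) ∩ k(y)`. Moreover the pair is a constant pair of Galois
invariants iff the common value lies in `k`. -/
theorem stmt10 {K : Type} [Field K] [Algebra ℂ K]
    (St : Finset (ℤ × ℤ)) (w : ℤ × ℤ → ℂ) (x y : K) (mx my : ℕ)
    (hset : Setting St w x y) (hb : ExponentBounds St mx my)
    (A B Cc D : MvPolynomial (Fin 3) ℂ)
    (hA : A ∈ MvPolynomial.supported ℂ ({0, 2} : Set (Fin 3)))
    (hB : B ∈ MvPolynomial.supported ℂ ({0, 2} : Set (Fin 3)))
    (hC : Cc ∈ MvPolynomial.supported ℂ ({1, 2} : Set (Fin 3)))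
    (hD : D ∈ MvPolynomial.supported ℂ ({1, 2} : Set (Fin 3)))
    (hB0 : B ≠ 0) (hD0 : D ≠ 0) :
    (IsInvariantPair St w mx my A B Cc D ↔
      evalXY St w x y A / evalXY St w x y B =
        evalXY St w x y Cc / evalXY St w x y D) ∧
    (IsInvariantPair St w mx my A B Cc D →
      evalXY St w x y A / evalXY St w x y B ∈ kxF St w x y ⊓ kyF St w x y) ∧
    (IsConstantPair St w mx my A B Cc D ↔
      (evalXY St w x y A / evalXY St w x y B =
          evalXY St w x y Cc / evalXY St w x y D ∧
        evalXY St w x y A / evalXY St w x y B ∈ kF St w x y)) := by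
  have hB' := not_kernelPoly_dvd hb hset.weight_ne hset.notUniv (i := 1)
    (by rintro (h | h) <;> simp [Fin.ext_iff] at h) hB hB0
  have hD' := not_kernelPoly_dvd hb hset.weight_ne hset.notUniv (i := 0)
    (by rintro (h | h) <;> simp [Fin.ext_iff] at h) hD hD0
  have hpair := isInvariantPair_iff hset hb (A := A) (Cc := Cc) hB' hD'
  refine ⟨hpair, fun h => ⟨?_, ?_⟩, ?_, ?_⟩
  · have hE : ∀ i ∈ ({0, 2} : Set (Fin 3)),
        ![x, y, (stepEval St w x y)⁻¹] i ∈ kxF St w x y := by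
      rintro i (rfl | rfl)
      · exact x_mem_kxF St w x y
      · exact inv_mem (S_mem_kxF St w x y)
    exact div_mem (evalXY_mem hE hA) (evalXY_mem hE hB)
  · have hE : ∀ i ∈ ({1, 2} : Set (Fin 3)),
        ![x, y, (stepEval St w x y)⁻¹] i ∈ kyF St w x y := by
      rintro i (rfl | rfl)
      · exact y_mem_kyF St w x y
      · exact inv_mem (S_mem_kyF St w x y)
    rw [hpair.1 h]
    exact div_mem (evalXY_mem hE hC) (evalXY_mem hE hD)
  · rintro ⟨h, c₁, c₂, hc₁, hc₂, hc0, hAc, -⟩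
    have hc' := not_kernelPoly_dvd hb hset.weight_ne hset.notUniv (i := 1)
      (by simp [Fin.ext_iff]) hc₂ hc0
    have hE : ∀ i ∈ ({2} : Set (Fin 3)),
        ![x, y, (stepEval St w x y)⁻¹] i ∈ kF St w x y := by
      rintro i rfl
      exact inv_mem (mem_adjoin_simple_self ℂ _)
    refine ⟨hpair.1 h, ?_⟩
    rw [(isInvariantPair_iff hset hb hB' hc').1 hAc]
    exact div_mem (evalXY_mem hE hc₁) (evalXY_mem hE hc₂)
  · rintro ⟨h, hk⟩
    obtain ⟨c₁, c₂, hc₁, hc₂, hc0, hc⟩ := exists_evalXY_of_mem_kF hk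
    have hc' := not_kernelPoly_dvd hb hset.weight_ne hset.notUniv (i := 1)
      (by simp [Fin.ext_iff]) hc₂ hc0
    exact ⟨hpair.2 h, c₁, c₂, hc₁, hc₂, hc0, (isInvariantPair_iff hset hb hB' hc').2 hc,
      (isInvariantPair_iff hset hb hD' hc').2 (h.symm.trans hc)⟩

end QuadrantWalk
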